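/- For every integer k ≥ 0, the double sum over all integers p and q of binom(2k, k+p)·binom(2k, k+q)·|p² − q²| equals 2k²·binom(2k, k)². -/

import Mathlib

/-!
For `u p = binom(2k, k + p)` and `v p = binom(2k + 2, k + 1 + p)`, two relations hold: `v` arises
from `u` by the filter `[1, 2, 1]`, and `((k + 1)² - p²) v p = (2k + 2)(2k + 1) u p`. The second
one turns `v p * v q * (p² - q²)` into `(2k + 2)(2k + 1) (v p * u q - u p * v q)`, so the double sum
is this antisymmetric expression summed against the sign of `|p| - |q|`. By the first relation and
self-adjointness of the filter, the filter can be moved onto this sign, which solves a discrete wave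
equation with source at the origin: only values at the origin survive.
-/

open Finset

section BinomialFilter

variable {R : Type*} [CommRing R]

/-- Convolution of a sequence indexed by `ℤ` with the binomial filter `[1, 2, 1]`. -/
def binomialFilter (u : ℤ → R) (p : ℤ) : R :=
  u (p - 1) + 2 * u p + u (p + 1)

lemma binomialFilter_intCast (u : ℤ → ℤ) (p : ℤ) :
    binomialFilter (fun x ↦ (u x : R)) p = (binomialFilter u p : ℤ) := by
  simp only [binomialFilter, Int.cast_add, Int.cast_mul, Int.cast_ofNat]

lemma binomialFilter_neg (u : ℤ → R) (p : ℤ) :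
    binomialFilter (fun x ↦ -u x) p = -binomialFilter u p := by
  rw [binomialFilter, binomialFilter]
  ring

lemma binomialFilter_comp_neg (u : ℤ → R) (p : ℤ) :
    binomialFilter (fun x ↦ u (-x)) p = binomialFilter u (-p) := by
  rw [binomialFilter, binomialFilter, neg_sub', neg_add', sub_neg_eq_add]
  ring

lemma binomialFilter_comp_abs (f : ℤ → R) (p : ℤ) :
    binomialFilter (fun x ↦ f |x|) p =
      binomialFilter f |p| + if p = 0 then f 1 - f (-1) else 0 := by
  rcases lt_trichotomy p 0 with hp | rfl | hp
  · rw [binomialFilter, binomialFilter, if_neg hp.ne, abs_of_neg hp,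
      abs_of_neg (by lia : p - 1 < 0), abs_of_nonpos (by lia : p + 1 ≤ 0), neg_sub', neg_add',
      sub_neg_eq_add]
    ring
  · simp only [binomialFilter, zero_sub, zero_add, abs_neg, abs_one, abs_zero, if_true]
    ring
  · rw [binomialFilter, binomialFilter, if_neg hp.ne', abs_of_pos hp,
      abs_of_nonneg (by lia : 0 ≤ p - 1), abs_of_pos (by lia : 0 < p + 1), add_zero]

lemma sum_Icc_comp_add_one {M : Type*} [AddCommMonoid M] {a b : ℤ} {u : ℤ → M}
    (hu : u.support ⊆ Set.Ioc a b) :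
    ∑ p ∈ Icc a b, u (p + 1) = ∑ p ∈ Icc a b, u p := by
  have hu_shift : (fun p ↦ u (p + 1)).support ⊆ (Icc a b : Finset ℤ) := fun p hp ↦ by
    have := hu (show p + 1 ∈ u.support from hp)
    grind
  have hu_Icc : u.support ⊆ (Icc a b : Finset ℤ) := by
    simpa using hu.trans Set.Ioc_subset_Icc_self
  rw [← finsum_eq_sum_of_support_subset _ hu_shift, ← finsum_eq_sum_of_support_subset _ hu_Icc]
  exact finsum_comp_equiv (Equiv.addRight (1 : ℤ))

lemma sum_binomialFilter_mul {a b : ℤ} {u : ℤ → R} (hu : u.support ⊆ Set.Ioo a b) (f : ℤ → R) :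
    ∑ p ∈ Icc a b, binomialFilter u p * f p = ∑ p ∈ Icc a b, u p * binomialFilter f p := by
  have shift_left : ∑ p ∈ Icc a b, u (p - 1) * f p = ∑ p ∈ Icc a b, u p * f (p + 1) := by
    rw [← sum_Icc_comp_add_one (u := fun p ↦ u (p - 1) * f p)]
    · simp only [add_sub_cancel_right]
    · intro p hp
      have := hu (left_ne_zero_of_mul hp)
      grind
  have shift_right : ∑ p ∈ Icc a b, u (p + 1) * f p = ∑ p ∈ Icc a b, u p * f (p - 1) := by
    rw [← sum_Icc_comp_add_one (u := fun p ↦ u p * f (p - 1))]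
    · simp only [add_sub_cancel_right]
    · exact fun p hp ↦ Set.Ioo_subset_Ioc_self (hu (left_ne_zero_of_mul hp))
  simp only [binomialFilter, add_mul, mul_add, sum_add_distrib, shift_left, shift_right,
    mul_left_comm, mul_assoc]
  ring

end BinomialFilter

section LightCone

/-- The sign of `|p| - |q|`, which tells on which side of the light cone `|p| = |q|` the point
`(p, q)` lies. -/
def lightConeSign (p q : ℤ) : ℤ :=
  (|p| - |q|).sign

/-- The indicator function of the origin of `ℤ × ℤ`, in curried form: the source of the discrete
wave equation solved by `lightConeSign`. -/
def originIndicator (p q : ℤ) : ℤ :=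
  if p = 0 ∧ q = 0 then 1 else 0

lemma abs_sq_sub_sq_eq_mul_lightConeSign (p q : ℤ) :
    |p ^ 2 - q ^ 2| = (p ^ 2 - q ^ 2) * lightConeSign p q := by
  have factorization : p ^ 2 - q ^ 2 = (|p| - |q|) * (|p| + |q|) := by
    rw [← sq_abs p, ← sq_abs q]
    ring
  rw [factorization, abs_mul, abs_of_nonneg (by positivity : 0 ≤ |p| + |q|), lightConeSign,
    mul_right_comm, Int.mul_sign_self, Int.natCast_natAbs]

lemma originIndicator_comm (p q : ℤ) : originIndicator p q = originIndicator q p := by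
  simp only [originIndicator, and_comm]

lemma binomialFilter_originIndicator (p q : ℤ) :
    binomialFilter (originIndicator p) q =
      if p = 0 then (1 - |q|).sign - (-1 - |q|).sign else 0 := by
  simp only [binomialFilter, originIndicator]
  grind

lemma binomialFilter_lightConeSign_left (p q : ℤ) :
    binomialFilter (lightConeSign · q) p =
      binomialFilter Int.sign (|p| - |q|) + binomialFilter (originIndicator p) q := by
  have translate : binomialFilter (fun a ↦ (a - |q|).sign) |p| =
      binomialFilter Int.sign (|p| - |q|) := by
    rw [binomialFilter, binomialFilter, sub_right_comm, add_sub_right_comm]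
  rw [binomialFilter_originIndicator, ← translate]
  exact binomialFilter_comp_abs (fun a ↦ (a - |q|).sign) p

lemma lightConeSign_swap (p q : ℤ) : lightConeSign q p = -lightConeSign p q := by
  rw [lightConeSign, lightConeSign, ← Int.sign_neg, neg_sub]

lemma binomialFilter_lightConeSign_right (p q : ℤ) :
    binomialFilter (lightConeSign p) q =
      binomialFilter Int.sign (|p| - |q|) - binomialFilter (originIndicator q) p := by
  have sign_odd : binomialFilter Int.sign (|q| - |p|) = -binomialFilter Int.sign (|p| - |q|) := by
    rw [← neg_sub, ← binomialFilter_comp_neg, ← binomialFilter_neg]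
    simp only [Int.sign_neg]
  calc
    binomialFilter (lightConeSign p) q = -binomialFilter (lightConeSign · p) q := by
      simp only [← binomialFilter_neg, ← lightConeSign_swap]
    _ = -(binomialFilter Int.sign (|q| - |p|) + binomialFilter (originIndicator q) p) := by
      rw [binomialFilter_lightConeSign_left]
    _ = binomialFilter Int.sign (|p| - |q|) - binomialFilter (originIndicator q) p := by
      rw [sign_odd, neg_add', neg_neg]

lemma binomialFilter_lightConeSign_sub (p q : ℤ) :
    binomialFilter (lightConeSign · q) p - binomialFilter (lightConeSign p) q =
      binomialFilter (originIndicator · q) p + binomialFilter (originIndicator p) q := by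
  simp only [originIndicator_comm _ q]
  rw [binomialFilter_lightConeSign_left, binomialFilter_lightConeSign_right]
  ring

end LightCone

section KernelPairing

variable {R : Type*} [CommRing R] {n : ℕ} {u v : ℤ → R}

/-- The pairing of the product `u p * v q` of two sequences with a kernel `K p q`, summed over the
square `-n ≤ p, q ≤ n`. -/
noncomputable def kernelPairing (n : ℕ) (u v : ℤ → R) (K : ℤ → ℤ → R) : R :=
  ∑ p ∈ Icc (-n : ℤ) n, ∑ q ∈ Icc (-n : ℤ) n, u p * v q * K p q

lemma kernelPairing_binomialFilter_left (hu : u.support ⊆ Set.Ioo (-n : ℤ) n)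
    (v : ℤ → R) (K : ℤ → ℤ → R) :
    kernelPairing n (binomialFilter u) v K =
      kernelPairing n u v fun p q ↦ binomialFilter (K · q) p := by
  rw [kernelPairing, kernelPairing, sum_comm]
  conv_rhs => rw [sum_comm]
  simp only [mul_right_comm _ (v _), ← sum_mul, sum_binomialFilter_mul hu]

lemma kernelPairing_binomialFilter_right (u : ℤ → R) (hv : v.support ⊆ Set.Ioo (-n : ℤ) n)
    (K : ℤ → ℤ → R) :
    kernelPairing n u (binomialFilter v) K =
      kernelPairing n u v fun p q ↦ binomialFilter (K p) q := by
  simp only [kernelPairing, mul_assoc, ← mul_sum, sum_binomialFilter_mul hv]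

lemma kernelPairing_originIndicator (n : ℕ) (u v : ℤ → R) :
    kernelPairing n u v (fun p q ↦ (originIndicator p q : R)) = u 0 * v 0 := by
  simp [kernelPairing, originIndicator, ite_and, sum_ite_irrel]

lemma kernelPairing_binomialFilter_sub_lightConeSign (hu : u.support ⊆ Set.Ioo (-n : ℤ) n)
    (hv : v.support ⊆ Set.Ioo (-n : ℤ) n) :
    kernelPairing n (binomialFilter u) v (fun p q ↦ (lightConeSign p q : R)) -
        kernelPairing n u (binomialFilter v) (fun p q ↦ (lightConeSign p q : R)) =
      binomialFilter u 0 * v 0 + u 0 * binomialFilter v 0 := by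
  rw [← kernelPairing_originIndicator n, ← kernelPairing_originIndicator n]
  simp only [kernelPairing_binomialFilter_left hu, kernelPairing_binomialFilter_right _ hv,
    binomialFilter_intCast]
  simp only [kernelPairing, ← sum_sub_distrib, ← sum_add_distrib, ← mul_sub, ← mul_add,
    ← Int.cast_sub, ← Int.cast_add, binomialFilter_lightConeSign_sub]

end KernelPairing

section CenteredChoose

/-- The binomial coefficient `binom(2k, k + p)` for `p : ℤ`. Replacing `p` by `p.natAbs`, which is
harmless by symmetry, gives the value `0` on both sides of `[-k, k]`. -/
def centeredChoose (k : ℕ) (p : ℤ) : ℤ :=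
  (2 * k).choose (k + p.natAbs)

lemma centeredChoose_even (k : ℕ) : (centeredChoose k).Even := fun p ↦ by
  rw [centeredChoose, centeredChoose, Int.natAbs_neg]

lemma centeredChoose_eq_choose_toNat {k : ℕ} {p : ℤ} (hp : -k ≤ p) :
    centeredChoose k p = (2 * k).choose (k + p).toNat := by
  rcases le_total 0 p with hp_nonneg | hp_nonpos
  · rw [centeredChoose, show (k + p).toNat = k + p.natAbs by lia]
  · rw [centeredChoose, Nat.choose_symm_of_eq_add (by lia : 2 * k = k + p.natAbs + (k + p).toNat)]

lemma support_centeredChoose_subset (k : ℕ) :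
    (centeredChoose k).support ⊆ Set.Icc (-k : ℤ) k := by
  intro p hp
  have : k + p.natAbs ≤ 2 * k := Nat.choose_ne_zero_iff.mp (Nat.cast_ne_zero.mp hp)
  grind

lemma binomialFilter_centeredChoose (k : ℕ) :
    binomialFilter (centeredChoose k) = centeredChoose (k + 1) := by
  have at_natCast : ∀ j : ℕ, binomialFilter (centeredChoose k) j = centeredChoose (k + 1) j
    | 0 => by
      have pascal : (2 * (k + 1)).choose (k + 1) =
          2 * ((2 * k).choose k + (2 * k).choose (k + 1)) := by
        rw [mul_add_one, Nat.choose_succ_succ', ← Nat.choose_symm_half, ← two_mul,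
          Nat.choose_succ_succ']
      simp only [binomialFilter, centeredChoose, Nat.cast_zero, zero_sub, zero_add, Int.natAbs_neg,
        Int.natAbs_one, Int.natAbs_zero, add_zero, pascal]
      push_cast
      ring
    | j + 1 => by
      simp only [binomialFilter, centeredChoose]
      rw [show (((j + 1 : ℕ) : ℤ) - 1).natAbs = j by lia,
        show (((j + 1 : ℕ) : ℤ) + 1).natAbs = j + 2 by lia, Int.natAbs_natCast, mul_add_one,
        add_right_comm k 1 (j + 1)]
      simp only [Nat.choose_succ_succ', ← add_assoc]
      push_cast
      ring
  funext p
  obtain ⟨j, rfl | rfl⟩ := p.eq_nat_or_neg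
  · exact at_natCast j
  · rw [← binomialFilter_comp_neg, centeredChoose_even]
    simp only [centeredChoose_even k _, at_natCast]

lemma add_one_mul_sub_mul_choose_add_two (m j : ℕ) :
    ((j : ℤ) + 1) * (m + 1 - j) * (m + 2).choose (j + 1) = (m + 2) * (m + 1) * m.choose j := by
  rcases le_or_gt j (m + 1) with hj | hj
  · have absorb_lower := Nat.add_one_mul_choose_eq (m + 1) j
    have absorb_complement := Nat.choose_mul_succ_eq m j
    zify [hj] at absorb_lower absorb_complement
    linear_combination (-(m : ℤ) - 1 + j) * absorb_lower - (m + 2 : ℤ) * absorb_complement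
  · rw [Nat.choose_eq_zero_of_lt (by lia), Nat.choose_eq_zero_of_lt (by lia)]
    simp

lemma sq_sub_sq_mul_centeredChoose (k : ℕ) (p : ℤ) :
    ((k + 1 : ℤ) ^ 2 - p ^ 2) * centeredChoose (k + 1) p =
      (2 * k + 2) * (2 * k + 1) * centeredChoose k p := by
  have absorb := add_one_mul_sub_mul_choose_add_two (2 * k) (k + p.natAbs)
  rw [← Int.natAbs_sq p, centeredChoose, centeredChoose, add_right_comm k 1, mul_add_one]
  push_cast at absorb ⊢
  linear_combination absorb

lemma centeredChoose_mul_mul_abs_sq_sub_sq (k : ℕ) (p q : ℤ) :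
    centeredChoose (k + 1) p * centeredChoose (k + 1) q * |p ^ 2 - q ^ 2| =
      (2 * k + 2) * (2 * k + 1) *
        (centeredChoose (k + 1) p * centeredChoose k q * lightConeSign p q -
          centeredChoose k p * centeredChoose (k + 1) q * lightConeSign p q) := by
  rw [abs_sq_sub_sq_eq_mul_lightConeSign]
  linear_combination
    centeredChoose (k + 1) p * lightConeSign p q * sq_sub_sq_mul_centeredChoose k q -
      centeredChoose (k + 1) q * lightConeSign p q * sq_sub_sq_mul_centeredChoose k p

lemma kernelPairing_centeredChoose_sub_lightConeSign (k : ℕ) :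
    kernelPairing (k + 1) (centeredChoose (k + 1)) (centeredChoose k) lightConeSign -
        kernelPairing (k + 1) (centeredChoose k) (centeredChoose (k + 1)) lightConeSign =
      2 * centeredChoose (k + 1) 0 * centeredChoose k 0 := by
  have hsupp : (centeredChoose k).support ⊆ Set.Ioo (-(k + 1 : ℕ) : ℤ) (k + 1 : ℕ) :=
    (support_centeredChoose_subset k).trans (Set.Icc_subset_Ioo (by lia) (by lia))
  have pairing := kernelPairing_binomialFilter_sub_lightConeSign hsupp hsupp
  simp only [binomialFilter_centeredChoose, Int.cast_id] at pairing
  rw [pairing]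
  ring

end CenteredChoose

/-- **Lemma (Brent and Osborn).** For every integer `k ≥ 0`,
`∑_p ∑_q binom(2k, k+p) * binom(2k, k+q) * |p² − q²| = 2 k² binom(2k, k)²`,
where the sums are over all integers `p, q` (effectively `-k ≤ p, q ≤ k`,
since `binom(m, j) = 0` for `j < 0` or `j > m`). -/
theorem binom_double_abs_sum (k : ℕ) :
    ∑ p ∈ Finset.Icc (-(k : ℤ)) (k : ℤ), ∑ q ∈ Finset.Icc (-(k : ℤ)) (k : ℤ),
      (((2 * k).choose ((k : ℤ) + p).toNat : ℤ) *
        ((2 * k).choose ((k : ℤ) + q).toNat : ℤ) * |p ^ 2 - q ^ 2|) =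
    2 * (k : ℤ) ^ 2 * ((2 * k).choose k : ℤ) ^ 2 := by
  rcases k with _ | k
  · simp
  calc
    _ = ∑ p ∈ Icc (-(k + 1 : ℕ) : ℤ) (k + 1 : ℕ), ∑ q ∈ Icc (-(k + 1 : ℕ) : ℤ) (k + 1 : ℕ),
          centeredChoose (k + 1) p * centeredChoose (k + 1) q * |p ^ 2 - q ^ 2| :=
      sum_congr rfl fun p hp ↦ sum_congr rfl fun q hq ↦ by
        rw [centeredChoose_eq_choose_toNat (mem_Icc.mp hp).1,
          centeredChoose_eq_choose_toNat (mem_Icc.mp hq).1]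
    _ = (2 * k + 2) * (2 * k + 1) *
          (kernelPairing (k + 1) (centeredChoose (k + 1)) (centeredChoose k) lightConeSign -
            kernelPairing (k + 1) (centeredChoose k) (centeredChoose (k + 1)) lightConeSign) := by
      simp only [centeredChoose_mul_mul_abs_sq_sub_sq, kernelPairing, ← mul_sum, sum_sub_distrib]
    _ = 2 * (k + 1 : ℕ) ^ 2 * centeredChoose (k + 1) 0 ^ 2 := by
      rw [kernelPairing_centeredChoose_sub_lightConeSign]
      push_cast
      linear_combination -2 * centeredChoose (k + 1) 0 * sq_sub_sq_mul_centeredChoose k 0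
    _ = 2 * (k + 1 : ℕ) ^ 2 * ((2 * (k + 1)).choose (k + 1) : ℤ) ^ 2 := rfl
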